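/- arXiv:2410.02839 — 2 statements merged into one kernel-verified Lean document; each statement's English description precedes it below -/
import Mathlib

section
/- Let f be a smooth frame on ℝ⁴ with connecting field C_f and torsion T_f x a b c = C_f x a b c − C_f x a c b. Then for all indices j, k, all points x, and all components a: Σ_{b} Σ_{c} T_f x a b c * (f j x) b * (f k x) c = ([f j, f k] x) a. In words: the torsion of the frame-parallelising derivative operator, contracted with two frame legs, equals the Lie bracket of those legs. -/
noncomputable section

open Filter Topology

/-- ℝ⁴, modelled as `Fin 4 → ℝ`. -/
abbrev E4 : Type := Fin 4 → ℝ

/-- Coordinate partial derivative `∂_b g (x)`. -/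
def pd (g : E4 → E4) (b : Fin 4) (x : E4) : E4 :=
  fderiv ℝ g x (Pi.single b 1)

/-- `fs` is the dual coframe of the frame `f`. -/
def IsDualCoframe (f fs : Fin 4 → (E4 → E4)) : Prop :=
  ∀ (x : E4) (i j : Fin 4), (∑ a, fs i x a * f j x a) = if i = j then 1 else 0

/-- A smooth frame on ℝ⁴: four smooth vector fields forming a basis at every point. -/
def IsSmoothFrame (f : Fin 4 → (E4 → E4)) : Prop :=
  (∀ i, ContDiff ℝ (⊤ : ℕ∞) (f i)) ∧ ∀ x : E4, LinearIndependent ℝ (fun i => f i x)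

/-- Connecting field `C_f x a b c = Σ_i (f* i x) c * ∂_b (f i)^a (x)` of the frame `f`
with dual coframe `fs`. -/
def conn (f fs : Fin 4 → (E4 → E4)) (x : E4) (a b c : Fin 4) : ℝ :=
  ∑ i, fs i x c * pd (f i) b x a

/-- Torsion of the connecting field of the frame `f` with dual coframe `fs`. -/
def torsion (f fs : Fin 4 → (E4 → E4)) (x : E4) (a b c : Fin 4) : ℝ :=
  conn f fs x a b c - conn f fs x a c b

/-- Lie bracket of vector fields on ℝ⁴. -/
def lie (X Y : E4 → E4) (x : E4) : E4 :=
  fderiv ℝ Y x (X x) - fderiv ℝ X x (Y x)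

theorem conn_contract (f fs : Fin 4 → (E4 → E4)) (hdual : IsDualCoframe f fs)
    (k : Fin 4) (x : E4) (a b : Fin 4) :
    ∑ c, conn f fs x a b c * f k x c = pd (f k) b x a := by
  have h : ∑ c, conn f fs x a b c * f k x c
      = ∑ i, (∑ c, fs i x c * f k x c) * pd (f i) b x a := by
    simp only [conn, Finset.sum_mul]
    rw [Finset.sum_comm]
    exact Finset.sum_congr rfl fun i _ => Finset.sum_congr rfl fun c _ => by ring
  rw [h]
  simp [hdual x]

theorem pd_contract (g : E4 → E4) (x v : E4) (a : Fin 4) :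
    ∑ b, pd g b x a * v b = fderiv ℝ g x v a := by
  conv_rhs => rw [pi_eq_sum_univ' v]
  simp only [map_sum, map_smul, Finset.sum_apply, Pi.smul_apply, smul_eq_mul, pd]
  refine Finset.sum_congr rfl fun b _ => ?_
  rw [mul_comm]

/-- the torsion of the frame-parallelising derivative operator,
contracted with two frame legs, equals the Lie bracket of those legs:
`Σ_b Σ_c T_f x a b c * (f j x) b * (f k x) c = ([f j, f k] x) a`. -/
theorem stmt2
    (f fs : Fin 4 → (E4 → E4))
    (hframe : IsSmoothFrame f)
    (hdual : IsDualCoframe f fs) :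
    ∀ (j k : Fin 4) (x : E4) (a : Fin 4),
      (∑ b, ∑ c, torsion f fs x a b c * f j x b * f k x c) = lie (f j) (f k) x a := by
  intro j k x a
  have h1 : ∑ b, ∑ c, conn f fs x a b c * f j x b * f k x c = fderiv ℝ (f k) x (f j x) a := by
    rw [← pd_contract]
    refine Finset.sum_congr rfl fun b _ => ?_
    rw [← conn_contract f fs hdual, Finset.sum_mul]
    exact Finset.sum_congr rfl fun c _ => by ring
  have h2 : ∑ b, ∑ c, conn f fs x a c b * f j x b * f k x c = fderiv ℝ (f j) x (f k x) a := by
    rw [← pd_contract, Finset.sum_comm]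
    refine Finset.sum_congr rfl fun c _ => ?_
    rw [← conn_contract f fs hdual, Finset.sum_mul]
  simp only [torsion, sub_mul, Finset.sum_sub_distrib, h1, h2, lie, Pi.sub_apply]
end
end

section
/- Let f be a smooth frame on ℝ⁴ with connecting field C_f and torsion T_f x a b c = C_f x a b c − C_f x a c b, and let x ∈ ℝ⁴. Then T_f x a b c = 0 for all a, b, c if and only if [f j, f k](x) = 0 for all j, k. In particular, the torsion of the derivative operator parallelising the frame f is non-vanishing at x if and only if the frame is anholonomic at x. -/
noncomputable section

open Filter Topology

theorem fderiv_apply_sum (g : E4 → E4) (x v : E4) (a : Fin 4) :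
    fderiv ℝ g x v a = ∑ b, v b * pd g b x a := by
  conv_lhs => rw [pi_eq_sum_univ' v]
  simp only [map_sum, map_smul, Finset.sum_apply, Pi.smul_apply, smul_eq_mul, pd]

/-- the torsion of the derivative operator parallelising the frame `f`
vanishes at a point `x` if and only if all Lie brackets of frame legs vanish at `x`
(i.e. the frame is holonomic at `x`). -/
theorem stmt3
    (f fs : Fin 4 → (E4 → E4))
    (hframe : IsSmoothFrame f)
    (hdual : IsDualCoframe f fs)
    (x : E4) :
    (∀ a b c : Fin 4, torsion f fs x a b c = 0) ↔
      (∀ j k : Fin 4, lie (f j) (f k) x = 0) := by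
  let F : Matrix (Fin 4) (Fin 4) ℝ := Matrix.of fun j b => f j x b
  let S : Matrix (Fin 4) (Fin 4) ℝ := Matrix.of fun i b => fs i x b
  let D : Fin 4 → Matrix (Fin 4) (Fin 4) ℝ := fun a => Matrix.of fun i b => pd (f i) b x a
  have hSF : S * F.transpose = 1 := by
    ext i j
    simpa [Matrix.mul_apply, Matrix.one_apply, S, F] using hdual x i j
  have hFS : F.transpose * S = 1 := mul_eq_one_comm.mp hSF
  have hFS' : F * S.transpose = 1 := by
    simpa using congrArg Matrix.transpose hSF
  have hSF' : S.transpose * F = 1 := mul_eq_one_comm.mp hFS'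
  let T : Fin 4 → Matrix (Fin 4) (Fin 4) ℝ := fun a =>
    (D a).transpose * S - S.transpose * D a
  let L : Fin 4 → Matrix (Fin 4) (Fin 4) ℝ := fun a =>
    F * (D a).transpose - D a * F.transpose
  have hT : ∀ a b c, torsion f fs x a b c = T a b c := by
    intro a b c
    simp [torsion, conn, T, Matrix.mul_apply, S, D, mul_comm]
  have hL : ∀ a j k, lie (f j) (f k) x a = L a j k := by
    intro a j k
    simp [lie, fderiv_apply_sum, L, Matrix.mul_apply, F, D, mul_comm]
  have h1 : ∀ a, L a = F * T a * F.transpose := by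
    intro a
    have e : F * T a * F.transpose = F * (D a).transpose * (S * F.transpose)
        - (F * S.transpose) * D a * F.transpose := by
      simp only [T]; noncomm_ring
    rw [e, hSF, hFS']; simp [L]
  have h2 : ∀ a, T a = S.transpose * L a * S := by
    intro a
    have e : S.transpose * L a * S = (S.transpose * F) * (D a).transpose * S
        - S.transpose * D a * (F.transpose * S) := by
      simp only [L]; noncomm_ring
    rw [e, hSF', hFS]; simp [T]
  constructor
  · intro h j k
    ext a
    have : T a = 0 := by
      ext b c
      rw [← hT, h]; rfl
    rw [hL, h1, this]; simp
  · intro h a b c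
    have : L a = 0 := by
      ext j k
      rw [← hL, h]; rfl
    rw [hT, h2, this]; simp
end
end
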